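/- For every closed term M of Λ⊕, Ψ(⟦M⟧v) = ⟦⟨M⟩(λx.x)⟧n: the pushforward along Ψ of the call-by-value small-step semantics of M equals the call-by-name small-step semantics of the CPS translation of M applied to the identity continuation. -/

import Mathlib

open scoped ENNReal

/-- Terms of Λ⊕ (and of Λ⊕⁺), in de Bruijn notation: variables, abstractions,
applications and binary (probabilistic) sums.  De Bruijn indices realize
"terms up to renaming of bound variables". -/
inductive Term : Type
  | var : ℕ → Term
  | lam : Term → Term
  | app : Term → Term → Term
  | choice : Term → Term → Term
  deriving DecidableEq

namespace Term

/-- Values: variables and abstractions. -/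
inductive IsValue : Term → Prop
  | var (n : ℕ) : IsValue (var n)
  | lam (M : Term) : IsValue (lam M)

/-- Boolean value test. -/
def isVal : Term → Bool
  | var _ => true
  | lam _ => true
  | _ => false

/-- Shifting of de Bruijn indices: add `d` to all indices `≥ c`. -/
def shift (d c : ℕ) : Term → Term
  | var n => if n < c then var n else var (n + d)
  | lam M => lam (shift d (c + 1) M)
  | app M N => app (shift d c M) (shift d c N)
  | choice M N => choice (shift d c M) (shift d c N)

/-- Capture-avoiding substitution `M[j := N]` (the variable `j` is consumed and
higher indices are decremented, as in a β-step). -/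
def subst : Term → ℕ → Term → Term
  | var n, j, N => if n = j then shift j 0 N else if j < n then var (n - 1) else var n
  | lam M, j, N => lam (subst M (j + 1) N)
  | app M L, j, N => app (subst M j N) (subst L j N)
  | choice M L, j, N => choice (subst M j N) (subst L j N)

/-- All free indices are `< n`. -/
def closedUnder : Term → ℕ → Prop
  | var m, n => m < n
  | lam M, n => closedUnder M (n + 1)
  | app M N, n => closedUnder M n ∧ closedUnder N n
  | choice M N, n => closedUnder M n ∧ closedUnder N n

/-- Closed terms: no free variables. -/
def Closed (M : Term) : Prop := closedUnder M 0

end Term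

/-- (Sub)distributions are represented as functions from terms into `ℝ≥0∞`;
genuine distributions (`IsDist`) are supported on values and have mass `≤ 1`. -/
abbrev PDist := Term → ℝ≥0∞

/-- The sum (total mass) `Σ𝒟` of a distribution. -/
noncomputable def dsum (D : PDist) : ℝ≥0∞ := ∑' M, D M

/-- The support of a distribution. -/
def dsupp (D : PDist) : Set Term := {M | D M ≠ 0}

/-- The everywhere-zero distribution `∅`. -/
noncomputable def dzero : PDist := fun _ => 0

/-- The Dirac distribution `{V^1}`. -/
noncomputable def dirac (V : Term) : PDist := fun M => if M = V then 1 else 0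

/-- Being a genuine (sub)probability distribution: supported on values, with
total mass at most one. -/
def IsDist (D : PDist) : Prop := (∀ M, D M ≠ 0 → M.IsValue) ∧ dsum D ≤ 1

/-- Call-by-value reduction `↦v`, relating a term to the (equiprobable) finite
sequence of its possible reducts. -/
inductive RedV : Term → List Term → Prop
  | beta {M V : Term} : V.IsValue → RedV (.app (.lam M) V) [M.subst 0 V]
  | choice {V W : Term} : V.IsValue → W.IsValue → RedV (.choice V W) [V, W]
  | appL {M N : Term} {Ls : List Term} :
      RedV M Ls → RedV (.app M N) (Ls.map (fun L => .app L N))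
  | appR {V M : Term} {Ns : List Term} :
      V.IsValue → RedV M Ns → RedV (.app V M) (Ns.map (fun L => .app V L))
  | choiceL {M N : Term} {Ls : List Term} :
      RedV M Ls → RedV (.choice M N) (Ls.map (fun L => .choice L N))
  | choiceR {V M : Term} {Ns : List Term} :
      V.IsValue → RedV M Ns → RedV (.choice V M) (Ns.map (fun L => .choice V L))

/-- Call-by-name reduction `↦n`. -/
inductive RedN : Term → List Term → Prop
  | beta {M N : Term} : RedN (.app (.lam M) N) [M.subst 0 N]
  | choice {M N : Term} : RedN (.choice M N) [M, N]
  | appL {M N : Term} {Ls : List Term} :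
      RedN M Ls → RedN (.app M N) (Ls.map (fun L => .app L N))

/-- The inductive small-step convergence relation `⇒`, parametric in the
underlying reduction relation: any term evaluates to `∅`; a value `V`
evaluates to `{V^1}`; and if `M ↦ N₁,…,Nₙ` and `Nᵢ ⇒ 𝒟ᵢ` then
`M ⇒ Σᵢ (1/n)𝒟ᵢ`. -/
inductive Conv (Red : Term → List Term → Prop) : Term → PDist → Prop
  | bot (M : Term) : Conv Red M dzero
  | val {V : Term} : V.IsValue → Conv Red V (dirac V)
  | step {M : Term} {Ns : List Term} (Ds : Fin Ns.length → PDist) :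
      Red M Ns → (∀ i, Conv Red (Ns.get i) (Ds i)) →
      Conv Red M (fun W => (∑ i, Ds i W) / (Ns.length : ℝ≥0∞))

/-- Call-by-value small-step convergence `⇒v`. -/
def SmallV : Term → PDist → Prop := Conv RedV

/-- Call-by-name small-step convergence `⇒n`. -/
def SmallN : Term → PDist → Prop := Conv RedN

/-- The small-step semantics `⟦M⟧`: the pointwise supremum of all distributions
derivable for `M`. -/
noncomputable def semOf (S : Term → PDist → Prop) (M : Term) : PDist :=
  fun W => ⨆ (D : PDist) (_ : S M D), D W

/-- Call-by-value small-step semantics `⟦M⟧v`. -/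
noncomputable def semV : Term → PDist := semOf SmallV

/-- Call-by-name small-step semantics `⟦M⟧n`. -/
noncomputable def semN : Term → PDist := semOf SmallN

/-- One-step unfolding of the divergence inference system: a value diverges
with probability `0`; if `M ↦ N₁,…,Nₙ` and `Nᵢ` diverges with probability
`pᵢ`, then `M` diverges with probability `Σᵢ (1/n)pᵢ`. -/
def DivStep (Red : Term → List Term → Prop) (R : Term → ℝ≥0∞ → Prop)
    (M : Term) (p : ℝ≥0∞) : Prop :=
  (M.IsValue ∧ p = 0) ∨
    ∃ (Ns : List Term) (ps : Fin Ns.length → ℝ≥0∞),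
      Red M Ns ∧ (∀ i, R (Ns.get i) (ps i)) ∧ p = (∑ i, ps i) / (Ns.length : ℝ≥0∞)

/-- The coinductively-defined divergence relation `⇓div`: the union of all
consistent relations between terms and probabilities in `[0,1]`. -/
def Diverges (Red : Term → List Term → Prop) (M : Term) (p : ℝ≥0∞) : Prop :=
  ∃ R : Term → ℝ≥0∞ → Prop,
    (∀ N q, R N q → q ≤ 1 ∧ DivStep Red R N q) ∧ R M p

/-- Call-by-value divergence `⇓div`. -/
def DivV : Term → ℝ≥0∞ → Prop := Diverges RedV

/-- Call-by-name divergence `⇓div,n`. -/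
def DivN : Term → ℝ≥0∞ → Prop := Diverges RedN

/-- One-step unfolding of the call-by-value big-step inference system. -/
def BigVStep (R : Term → PDist → Prop) (M : Term) (D : PDist) : Prop :=
  (M.IsValue ∧ D = dirac M) ∨
  (∃ (N L : Term) (E F : PDist) (G : Term → Term → PDist),
      M = .app N L ∧ R N E ∧ R L F ∧
      (∀ P V, E (.lam P) ≠ 0 → V.IsValue → F V ≠ 0 → R (P.subst 0 V) (G P V)) ∧
      D = fun W => ∑' (P : Term), ∑' (V : Term), E (.lam P) * F V * G P V W) ∨
  (∃ (N L : Term) (E F : PDist),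
      M = .choice N L ∧ R N E ∧ R L F ∧
      D = fun W => (E W * dsum F + F W * dsum E) / 2)

/-- The coinductive call-by-value big-step relation `⇓v`: the union of all
consistent relations between terms and distributions. -/
def BigV (M : Term) (D : PDist) : Prop :=
  ∃ R : Term → PDist → Prop,
    (∀ N E, R N E → IsDist E ∧ BigVStep R N E) ∧ R M D

/-- One-step unfolding of the call-by-name big-step inference system. -/
def BigNStep (R : Term → PDist → Prop) (M : Term) (D : PDist) : Prop :=
  (M.IsValue ∧ D = dirac M) ∨
  (∃ (N L : Term) (E : PDist) (F : Term → PDist),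
      M = .app N L ∧ R N E ∧
      (∀ P, E (.lam P) ≠ 0 → R (P.subst 0 L) (F P)) ∧
      D = fun W => ∑' (P : Term), E (.lam P) * F P W) ∨
  (∃ (N L : Term) (E F : PDist),
      M = .choice N L ∧ R N E ∧ R L F ∧ D = fun W => (E W + F W) / 2)

/-- The coinductive call-by-name big-step relation `⇓n`. -/
def BigN (M : Term) (D : PDist) : Prop :=
  ∃ R : Term → PDist → Prop,
    (∀ N E, R N E → IsDist E ∧ BigNStep R N E) ∧ R M D

/-- Big-step semantics `⟪M⟫`: the pointwise infimum of all distributions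
derivable for `M` in a big-step system. -/
noncomputable def bigSemOf (B : Term → PDist → Prop) (M : Term) : PDist :=
  fun W => ⨅ (D : PDist) (_ : B M D), D W

open Term in
/-- The call-by-value CPS translation `⟨·⟩` of Plotkin, extended to binary
choice (de Bruijn version; the continuation variables `ε, α, β, γ` of `Λ⊕⁺`
are rendered as the extra binders introduced by the translation). -/
def cps : Term → Term
  | .var n => .lam (.app (.var 0) (.var (n + 1)))
  | .lam M => .lam (.app (.var 0) (.lam (shift 1 1 (cps M))))
  | .app M N =>
      .lam (.app (shift 1 0 (cps M))
        (.lam (.app (shift 2 0 (cps N))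
          (.lam (.app (.app (.var 1) (.var 0)) (.var 2))))))
  | .choice M N =>
      .lam (.app (shift 1 0 (cps M))
        (.lam (.app (shift 2 0 (cps N))
          (.lam (.app
            (.choice (.lam (.app (.var 0) (.var 2))) (.lam (.app (.var 0) (.var 1))))
            (.var 2))))))

/-- The map `Ψ` on values: `Ψ(x) = x`, `Ψ(λx.M) = λx.⟨M⟩` (extended
structurally to all terms). -/
def psi : Term → Term
  | .var n => .var n
  | .lam M => .lam (cps M)
  | .app M N => .app (psi M) (psi N)
  | .choice M N => .choice (psi M) (psi N)

/-- The pushforward of a distribution along `Ψ`: `Ψ(𝒟)(W) = Σ_{V : Ψ(V)=W} 𝒟(V)`. -/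
noncomputable def pushPsi (D : PDist) : PDist :=
  fun W => ∑' V : Term, if psi V = W then D V else 0

open Term in
/-- The call-by-name CPS translation `⌈·⌉` (de Bruijn version). -/
def cpn : Term → Term
  | .var n => .var n
  | .lam M => .lam (.app (.var 0) (.lam (shift 1 1 (cpn M))))
  | .app M N =>
      .lam (.app (shift 1 0 (cpn M))
        (.lam (.app (.app (.var 0) (shift 2 0 (cpn N))) (.var 1))))
  | .choice M N =>
      .lam (.app
        (.choice (.lam (.app (shift 2 0 (cpn M)) (.var 0)))
                 (.lam (.app (shift 2 0 (cpn N)) (.var 0))))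
        (.var 0))

/-- The map `Φ` on values: `Φ(x) = x(λy.y)`, `Φ(λx.M) = λx.⌈M⌉` (extended
structurally to all terms). -/
def phi : Term → Term
  | .var n => .app (.var n) (.lam (.var 0))
  | .lam M => .lam (cpn M)
  | .app M N => .app (phi M) (phi N)
  | .choice M N => .choice (phi M) (phi N)

/-- The pushforward of a distribution along `Φ`. -/
noncomputable def pushPhi (D : PDist) : PDist :=
  fun W => ∑' V : Term, if phi V = W then D V else 0

open Term in
/-- Plotkin's infix operator `M : K` for the call-by-value CPS translation,
extended to binary choice. -/
def colonV : Term → Term → Term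
  | .var n, K => .app K (psi (.var n))
  | .lam M, K => .app K (psi (.lam M))
  | .app L P, K =>
      if L.isVal then
        if P.isVal then .app (.app (psi L) (psi P)) K
        else colonV P (.lam (.app (.app (shift 1 0 (psi L)) (.var 0)) (shift 1 0 K)))
      else
        colonV L (.lam (.app (shift 1 0 (cps P))
          (.lam (.app (.app (.var 1) (.var 0)) (shift 2 0 K)))))
  | .choice L P, K =>
      if L.isVal then
        if P.isVal then
          .app (.choice (.lam (.app (.var 0) (shift 1 0 (psi L))))
                        (.lam (.app (.var 0) (shift 1 0 (psi P))))) K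
        else
          colonV P (.lam (.app
            (.choice (.lam (.app (.var 0) (shift 2 0 (psi L))))
                     (.lam (.app (.var 0) (.var 1))))
            (shift 1 0 K)))
      else
        colonV L (.lam (.app (shift 1 0 (cps P))
          (.lam (.app
            (.choice (.lam (.app (.var 0) (.var 2))) (.lam (.app (.var 0) (.var 1))))
            (shift 2 0 K)))))

/-- A deterministic reduction step: a reduction whose right-hand side is a
one-element sequence. -/
def DetStepN (M N : Term) : Prop := RedN M [N]

/-- Scott numerals: `⌜0⌝ = λxy.x`, `⌜n+1⌝ = λxy.y⌜n⌝`. -/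
def scott : ℕ → Term
  | 0 => .lam (.lam (.var 1))
  | n + 1 => .lam (.lam (.app (.var 0) (scott n)))

/-- The binary string (of length `n`) made of the first `n` digits of the
binary expansion of `x ∈ [0,1]`. -/
noncomputable def binApprox (x : ℝ≥0∞) (n : ℕ) : List Bool :=
  (List.range n).map (fun i => decide (⌊x.toReal * 2 ^ (i + 1)⌋ % 2 = 1))

/-- A distribution `D : ℕ → [0,1]` is computable when its approximating
function `(a, n) ↦` first `n` binary digits of `D a` is computable. -/
def ComputableDist (D : ℕ → ℝ≥0∞) : Prop :=
  Computable fun p : ℕ × ℕ => binApprox (D p.1) p.2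

/-!
The simulation is Plotkin's, carried over to probabilistic reduction. The colon term `M : K`
(`colonV M K`) is `⟨M⟩K` after its administrative redexes have been contracted, so `⟨M⟩K` reduces
to it by one-reduct call-by-name steps, and each step `M ↦v N₁,…,Nₙ` is matched by a step of
`M : K`, preceded and followed by one-reduct steps, leading to `N₁ : K,…,Nₙ : K`. Since both
strategies are deterministic, the semantics is the increasing limit of its step-indexed
approximants and one-reduct steps do not change it; comparing the approximants on the two sides
gives the two inequalities.
-/

namespace Term

theorem isVal_iff_isValue {M : Term} : M.isVal ↔ M.IsValue := by
  cases M with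
  | var n => exact iff_of_true rfl (.var n)
  | lam M => exact iff_of_true rfl (.lam M)
  | app M N | choice M N => exact iff_of_false Bool.false_ne_true nofun

theorem isValue_shift {V : Term} (hV : V.IsValue) (d c : ℕ) : (V.shift d c).IsValue := by
  cases hV with
  | var n => rw [shift]; split_ifs <;> exact .var _
  | lam M => exact .lam _

theorem shift_zero (M : Term) (c : ℕ) : shift 0 c M = M := by
  induction M generalizing c with
  | var n => simp [shift]
  | lam M ih => rw [shift, ih]
  | app M N ihM ihN | choice M N ihM ihN => rw [shift, ihM, ihN]

theorem shift_shift_comm (M : Term) (d k : ℕ) {b c : ℕ} (hbc : b ≤ c) :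
    shift k b (shift d c M) = shift d (c + k) (shift k b M) := by
  induction M generalizing b c with
  | var n => grind [shift]
  | lam M ih => simp only [shift, ih (Nat.add_le_add_right hbc 1), Nat.add_right_comm _ _ 1]
  | app M N ihM ihN | choice M N ihM ihN => simp only [shift, ihM hbc, ihN hbc]

theorem shift_shift_add (M : Term) (d k : ℕ) {b c : ℕ} (hbc : b ≤ c) (hck : c ≤ b + k) :
    shift d c (shift k b M) = shift (k + d) b M := by
  induction M generalizing b c with
  | var n => grind [shift]
  | lam M ih => simp only [shift, ih (b := b + 1) (c := c + 1) (by lia) (by lia)]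
  | app M N ihM ihN | choice M N ihM ihN => simp only [shift, ihM hbc hck, ihN hbc hck]

theorem subst_shift_cancel (M N : Term) (d : ℕ) {c j : ℕ} (hcj : c ≤ j) (hjd : j ≤ c + d) :
    subst (shift (d + 1) c M) j N = shift d c M := by
  induction M generalizing c j with
  | var n => grind [shift, subst]
  | lam M ih => simp only [shift, subst, ih (c := c + 1) (j := j + 1) (by lia) (by lia)]
  | app M L ihM ihL | choice M L ihM ihL => simp only [shift, subst, ihM hcj hjd, ihL hcj hjd]

theorem subst_shift_add (M N : Term) (d : ℕ) {c j : ℕ} (hcj : c ≤ j) :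
    subst (shift d c M) (j + d) N = shift d c (subst M j N) := by
  induction M generalizing c j with
  | var n => grind [shift, subst, shift_shift_add]
  | lam M ih =>
    simp only [shift, subst, ← ih (Nat.add_le_add_right hcj 1), Nat.add_right_comm _ _ 1]
  | app M L ihM ihL | choice M L ihM ihL => simp only [shift, subst, ihM hcj, ihL hcj]

theorem subst_shift_one (M N : Term) : subst (shift 1 0 M) 0 N = M := by
  rw [subst_shift_cancel M N 0 le_rfl le_rfl, shift_zero]

theorem subst_shift_two (M N : Term) : subst (shift 2 0 M) 1 N = shift 1 0 M :=
  subst_shift_cancel M N 1 zero_le_one le_rfl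

theorem cps_shift (M : Term) (d c : ℕ) : cps (shift d c M) = shift d c (cps M) := by
  induction M generalizing c with
  | var n => grind [shift, cps]
  | lam M ih => simp [shift, cps, ih, shift_shift_comm _ d 1 (Nat.le_add_left 1 c)]
  | app M N ihM ihN | choice M N ihM ihN =>
    simp [shift, cps, ihM, ihN, shift_shift_comm _ d 1 c.zero_le, shift_shift_comm _ d 2 c.zero_le]

theorem psi_shift (M : Term) (d c : ℕ) : psi (shift d c M) = shift d c (psi M) := by
  induction M generalizing c with
  | var n => grind [shift, psi]
  | lam M => simp only [shift, psi, cps_shift]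
  | app M N ihM ihN | choice M N ihM ihN => simp only [shift, psi, ihM, ihN]

theorem isValue_psi {V : Term} (hV : V.IsValue) : (psi V).IsValue := by
  cases hV with
  | var n => exact .var n
  | lam M => exact .lam (cps M)

theorem cps_of_isValue {V : Term} (hV : V.IsValue) :
    cps V = lam (app (var 0) (shift 1 0 (psi V))) := by
  cases hV <;> rfl

theorem subst_cps_psi {V : Term} (hV : V.IsValue) (M : Term) (j : ℕ) :
    subst (cps M) j (psi V) = cps (subst M j V) := by
  induction M generalizing j with
  | var n =>
    rcases lt_trichotomy n j with h | rfl | h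
    · grind [cps, subst]
    · simp [cps, subst, cps_of_isValue (isValue_shift hV n 0), psi_shift, shift_shift_add]
    · grind [cps, subst]
  | lam M ih =>
    simp [cps, subst, ← ih, ← subst_shift_add _ _ 1 (Nat.le_add_left 1 j)]
  | app M N ihM ihN | choice M N ihM ihN =>
    simp [cps, subst, ← ihM, ← ihN, ← subst_shift_add _ _ 1 j.zero_le,
      ← subst_shift_add _ _ 2 j.zero_le]

end Term

theorem RedV.not_isValue {M : Term} {Ns : List Term} (h : RedV M Ns) : ¬ M.IsValue := by
  cases h <;> exact nofun

theorem RedN.not_isValue {M : Term} {Ns : List Term} (h : RedN M Ns) : ¬ M.IsValue := by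
  cases h <;> exact nofun

-- Two different rules never apply to the same term: one of them would reduce a value.
theorem RedV.unique {M : Term} {Ns Ns' : List Term} (h : RedV M Ns) (h' : RedV M Ns') :
    Ns = Ns' := by
  induction h generalizing Ns' <;> cases h' <;> grind [→ RedV.not_isValue, Term.IsValue]

theorem RedN.unique {M : Term} {Ns Ns' : List Term} (h : RedN M Ns) (h' : RedN M Ns') :
    Ns = Ns' := by
  induction h generalizing Ns' <;> cases h' <;> grind [→ RedN.not_isValue, Term.IsValue]

/-- Deterministic reduction relations: values are irreducible and every other term has at most one
sequence of reducts. -/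
structure IsStrategy (Red : Term → List Term → Prop) : Prop where
  unique : ∀ {M Ns Ns'}, Red M Ns → Red M Ns' → Ns = Ns'
  not_isValue : ∀ {M Ns}, Red M Ns → ¬ M.IsValue

theorem isStrategy_redV : IsStrategy RedV := ⟨RedV.unique, RedV.not_isValue⟩

theorem isStrategy_redN : IsStrategy RedN := ⟨RedN.unique, RedN.not_isValue⟩

/-- Stuck terms: irreducible terms that are not values. -/
def Stuck (Red : Term → List Term → Prop) (M : Term) : Prop :=
  ¬ M.IsValue ∧ ∀ Ns, ¬ Red M Ns

theorem isValue_or_red_or_stuck (Red : Term → List Term → Prop) (M : Term) :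
    M.IsValue ∨ (∃ Ns, Red M Ns) ∨ Stuck Red M := by
  rw [Stuck, ← not_exists]
  tauto

/-- Reduction in finitely many steps, each of which has a single reduct. -/
abbrev DetSteps (Red : Term → List Term → Prop) : Term → Term → Prop :=
  Relation.ReflTransGen fun M N => Red M [N]

/-- Weak reduction of `P` to the sequence `Qs`: a reduction step in which single-reduct steps are
allowed before, and after it in each of the reducts. -/
def WeakStep (Red : Term → List Term → Prop) (P : Term) (Qs : List Term) : Prop :=
  ∃ P' Ps, DetSteps Red P P' ∧ Red P' Ps ∧ List.Forall₂ (DetSteps Red) Ps Qs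

theorem WeakStep.map_trans {Red : Term → List Term → Prop} {P : Term} {Ns : List Term}
    {f g : Term → Term} (h : WeakStep Red P (Ns.map f)) (hfg : ∀ N, DetSteps Red (f N) (g N)) :
    WeakStep Red P (Ns.map g) := by
  obtain ⟨P', Ps, hP, hred, hPs⟩ := h
  rw [List.forall₂_map_right_iff] at hPs
  exact ⟨P', Ps, hP, hred, List.forall₂_map_right_iff.2 (hPs.imp fun _ N h => h.trans (hfg N))⟩

section UniformMean

variable {α β : Type*}

/-- The mean of `f` over the entries of a list, i.e. the weighting `Σᵢ (1/n) f(aᵢ)` of the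
convergence relation; it is `0` on the empty list. -/
noncomputable def uniformMean (f : α → ℝ≥0∞) (l : List α) : ℝ≥0∞ :=
  (l.map f).sum / l.length

theorem uniformMean_singleton (f : α → ℝ≥0∞) (a : α) : uniformMean f [a] = f a := by
  simp [uniformMean]

theorem uniformMean_eq_sum_get (f : α → ℝ≥0∞) (l : List α) :
    uniformMean f l = (∑ i, f (l.get i)) / l.length := by
  rw [uniformMean, ← Fin.sum_univ_fun_getElem]
  rfl

theorem uniformMean_map (f : β → ℝ≥0∞) (g : α → β) (l : List α) :
    uniformMean f (l.map g) = uniformMean (f ∘ g) l := by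
  simp only [uniformMean, List.map_map, List.length_map]

theorem uniformMean_le_of_forall₂ {f : α → ℝ≥0∞} {g : β → ℝ≥0∞} {l : List α} {l' : List β}
    (h : List.Forall₂ (fun a b => f a ≤ g b) l l') : uniformMean f l ≤ uniformMean g l' := by
  rw [uniformMean, uniformMean, h.length_eq]
  refine ENNReal.div_le_div_right (List.Forall₂.sum_le_sum ?_) _
  rwa [List.forall₂_map_left_iff, List.forall₂_map_right_iff]

theorem uniformMean_mono {f g : α → ℝ≥0∞} (l : List α) (h : f ≤ g) :
    uniformMean f l ≤ uniformMean g l :=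
  uniformMean_le_of_forall₂ (List.forall₂_same.2 fun a _ => h a)

theorem uniformMean_iSup_of_monotone {ι : Type*} [Preorder ι] [IsDirectedOrder ι]
    {f : ι → α → ℝ≥0∞} (hf : Monotone f) (l : List α) :
    uniformMean (fun a => ⨆ k, f k a) l = ⨆ k, uniformMean (f k) l := by
  have hget (i : Fin l.length) : Monotone fun k => f k (l.get i) := fun _ _ hk => hf hk _
  simp only [uniformMean_eq_sum_get, ENNReal.finsetSum_iSup_of_monotone hget, ENNReal.iSup_div]

end UniformMean

section Semantics

variable {Red : Term → List Term → Prop} {M N : Term} {Ns : List Term}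

open Classical in
/-- The step-indexed approximant of the semantics of a term: the distribution of the values
reached by reductions of length less than `k`. -/
noncomputable def approx (Red : Term → List Term → Prop) : ℕ → Term → PDist
  | 0, _ => dzero
  | k + 1, M =>
      if M.IsValue then dirac M
      else fun W => ⨆ (Ns : List Term) (_ : Red M Ns), uniformMean (approx Red k · W) Ns

theorem approx_succ_of_isValue (hM : M.IsValue) (k : ℕ) : approx Red (k + 1) M = dirac M :=
  if_pos hM

theorem approx_succ_of_red (hRed : IsStrategy Red) (h : Red M Ns) (k : ℕ) :
    approx Red (k + 1) M = fun W => uniformMean (approx Red k · W) Ns := by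
  rw [approx, if_neg (hRed.not_isValue h)]
  funext W
  refine le_antisymm (iSup₂_le fun Ns' h' => ?_) (le_iSup₂_of_le Ns h le_rfl)
  rw [hRed.unique h' h]

theorem approx_of_stuck (hM : Stuck Red M) (k : ℕ) : approx Red k M = dzero := by
  cases k with
  | zero => rfl
  | succ k =>
    rw [approx, if_neg hM.1]
    funext W
    simp [hM.2, dzero]

theorem approx_mono (Red : Term → List Term → Prop) : Monotone (approx Red) := by
  refine monotone_nat_of_le_succ fun k => ?_
  induction k with
  | zero => exact fun M W => zero_le
  | succ k ih =>
    intro M W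
    rw [approx, approx]
    split_ifs
    · exact le_rfl
    · exact iSup₂_mono fun Ns _ => uniformMean_mono Ns fun N => ih N W

theorem conv_approx (hRed : IsStrategy Red) (k : ℕ) (M : Term) : Conv Red M (approx Red k M) := by
  induction k generalizing M with
  | zero => exact .bot M
  | succ k ih =>
    rcases isValue_or_red_or_stuck Red M with hM | ⟨Ns, h⟩ | hM
    · rw [approx_succ_of_isValue hM]
      exact .val hM
    · simp only [approx_succ_of_red hRed h, uniformMean_eq_sum_get]
      exact .step _ h fun i => ih _
    · rw [approx_of_stuck hM]
      exact .bot M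

theorem exists_le_approx_of_conv (hRed : IsStrategy Red) {D : PDist} (h : Conv Red M D) :
    ∃ k, D ≤ approx Red k M := by
  induction h with
  | bot M => exact ⟨0, le_rfl⟩
  | val hV => exact ⟨1, (approx_succ_of_isValue hV 0).ge⟩
  | step Ds hred _ ih =>
    choose k hk using ih
    refine ⟨Finset.univ.sup k + 1, fun W => ?_⟩
    simp only [approx_succ_of_red hRed hred, uniformMean_eq_sum_get]
    refine ENNReal.div_le_div_right (Finset.sum_le_sum fun i _ => (hk i W).trans ?_) _
    exact approx_mono Red (Finset.le_sup (Finset.mem_univ i)) _ W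

theorem semOf_eq_iSup_approx (hRed : IsStrategy Red) (M : Term) :
    semOf (Conv Red) M = fun W => ⨆ k, approx Red k M W := by
  funext W
  refine le_antisymm (iSup₂_le fun D hD => ?_) (iSup_le fun k => ?_)
  · obtain ⟨k, hk⟩ := exists_le_approx_of_conv hRed hD
    exact le_iSup_of_le k (hk W)
  · exact le_iSup₂_of_le _ (conv_approx hRed k M) le_rfl

theorem semOf_eq_iSup_approx_succ (hRed : IsStrategy Red) (M : Term) :
    semOf (Conv Red) M = fun W => ⨆ k, approx Red (k + 1) M W := by
  rw [semOf_eq_iSup_approx hRed]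
  funext W
  exact (Monotone.iSup_nat_add (fun _ _ hk => approx_mono Red hk M W) 1).symm

theorem semOf_of_isValue (hRed : IsStrategy Red) (hM : M.IsValue) :
    semOf (Conv Red) M = dirac M := by
  simp only [semOf_eq_iSup_approx_succ hRed, approx_succ_of_isValue hM, ciSup_const]

theorem semOf_of_red (hRed : IsStrategy Red) (h : Red M Ns) :
    semOf (Conv Red) M = fun W => uniformMean (semOf (Conv Red) · W) Ns := by
  rw [semOf_eq_iSup_approx_succ hRed]
  funext W
  simp only [approx_succ_of_red hRed h, semOf_eq_iSup_approx hRed]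
  exact (uniformMean_iSup_of_monotone (fun _ _ hk N => approx_mono Red hk N W) Ns).symm

theorem semOf_eq_of_detSteps (hRed : IsStrategy Red) (h : DetSteps Red M N) :
    semOf (Conv Red) M = semOf (Conv Red) N := by
  induction h with
  | refl => rfl
  | tail _ h ih => simp only [ih, semOf_of_red hRed h, uniformMean_singleton]

theorem approx_le_of_detSteps (hRed : IsStrategy Red) (h : DetSteps Red M N) (k : ℕ) :
    approx Red k M ≤ approx Red k N := by
  induction h with
  | refl => exact le_rfl
  | @tail N N' _ h ih =>
    calc approx Red k M ≤ approx Red k N := ih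
      _ ≤ approx Red (k + 1) N := approx_mono Red k.le_succ N
      _ = approx Red k N' := by simp only [approx_succ_of_red hRed h, uniformMean_singleton]

theorem WeakStep.uniformMean_semOf_le (hRed : IsStrategy Red) (h : WeakStep Red M Ns) (W : Term) :
    uniformMean (semOf (Conv Red) · W) Ns ≤ semOf (Conv Red) M W := by
  obtain ⟨M', Ps, hM, hred, hPs⟩ := h
  rw [semOf_eq_of_detSteps hRed hM, semOf_of_red hRed hred]
  exact uniformMean_le_of_forall₂
    (hPs.flip.imp fun _ _ h => (congrFun (semOf_eq_of_detSteps hRed h) W).ge)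

theorem WeakStep.approx_succ_le (hRed : IsStrategy Red) (h : WeakStep Red M Ns) (k : ℕ)
    (W : Term) : approx Red (k + 1) M W ≤ uniformMean (approx Red k · W) Ns := by
  obtain ⟨M', Ps, hM, hred, hPs⟩ := h
  refine (approx_le_of_detSteps hRed hM (k + 1) W).trans ?_
  rw [approx_succ_of_red hRed hred]
  exact uniformMean_le_of_forall₂ (hPs.imp fun _ _ h => approx_le_of_detSteps hRed h k W)

end Semantics

section Pushforward

theorem pushPsi_dirac (V : Term) : pushPsi (dirac V) = dirac (psi V) := by
  funext W
  rw [pushPsi, tsum_eq_single V fun V' hV' => by simp [dirac, hV']]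
  simp [dirac, eq_comm]

theorem pushPsi_dzero : pushPsi dzero = dzero := by
  funext W
  simp [pushPsi, dzero]

theorem pushPsi_uniformMean {α : Type*} (F : α → PDist) (l : List α) (W : Term) :
    pushPsi (fun V => uniformMean (F · V) l) W = uniformMean (fun a => pushPsi (F a) W) l := by
  simp only [uniformMean_eq_sum_get, pushPsi, div_eq_mul_inv]
  rw [← Summable.tsum_finsetSum fun _ _ => ENNReal.summable, ← ENNReal.tsum_mul_right]
  refine tsum_congr fun V => ?_
  split_ifs <;> simp

theorem pushPsi_iSup_of_monotone {ι : Type*} [Preorder ι] [IsDirectedOrder ι] {D : ι → PDist}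
    (hD : Monotone D) (W : Term) : pushPsi (fun V => ⨆ k, D k V) W = ⨆ k, pushPsi (D k) W := by
  let Dₖ (V : Term) (k : ι) : ℝ≥0∞ := if psi V = W then D k V else 0
  have hDₖ (V : Term) : Monotone (Dₖ V) := by
    intro k l hkl
    dsimp only [Dₖ]
    split_ifs
    exacts [hD hkl V, le_rfl]
  calc pushPsi (fun V => ⨆ k, D k V) W = ∑' V, ⨆ k, Dₖ V k := by
        refine tsum_congr fun V => ?_
        dsimp only [Dₖ]
        split_ifs <;> simp
    _ = ⨆ s : Finset Term, ⨆ k, ∑ V ∈ s, Dₖ V k := by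
        simp only [ENNReal.tsum_eq_iSup_sum, ENNReal.finsetSum_iSup_of_monotone hDₖ]
    _ = ⨆ k, pushPsi (D k) W := by
        rw [iSup_comm]
        exact iSup_congr fun k => ENNReal.tsum_eq_iSup_sum.symm

end Pushforward

section Simulation

/-- A weak simulation, along `f`, of one strategy by another: values are sent to terms reducing to
their `psi`-image, reduction steps to weak steps, and stuck terms to stuck terms. -/
structure IsWeakSimulation (Red Red' : Term → List Term → Prop) (f : Term → Term) : Prop where
  detSteps : ∀ {V}, V.IsValue → DetSteps Red' (f V) (psi V)
  weakStep : ∀ {M Ns}, Red M Ns → WeakStep Red' (f M) (Ns.map f)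
  stuck : ∀ {M}, Stuck Red M → Stuck Red' (f M)

variable {Red Red' : Term → List Term → Prop} {f : Term → Term}

theorem IsWeakSimulation.pushPsi_approx_le (hf : IsWeakSimulation Red Red' f)
    (hRed : IsStrategy Red) (hRed' : IsStrategy Red') (k : ℕ) (M : Term) :
    pushPsi (approx Red k M) ≤ semOf (Conv Red') (f M) := by
  induction k generalizing M with
  | zero => exact pushPsi_dzero.trans_le fun W => zero_le
  | succ k ih =>
    rcases isValue_or_red_or_stuck Red M with hM | ⟨Ns, h⟩ | hM
    · rw [approx_succ_of_isValue hM, pushPsi_dirac, semOf_eq_of_detSteps hRed' (hf.detSteps hM),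
        semOf_of_isValue hRed' (Term.isValue_psi hM)]
    · intro W
      calc pushPsi (approx Red (k + 1) M) W
          = uniformMean (fun N => pushPsi (approx Red k N) W) Ns := by
            rw [approx_succ_of_red hRed h, pushPsi_uniformMean]
        _ ≤ uniformMean ((semOf (Conv Red') · W) ∘ f) Ns :=
            uniformMean_mono Ns fun N => ih N W
        _ = uniformMean (semOf (Conv Red') · W) (Ns.map f) := (uniformMean_map _ f Ns).symm
        _ ≤ semOf (Conv Red') (f M) W := (hf.weakStep h).uniformMean_semOf_le hRed' W
    · rw [approx_of_stuck hM, pushPsi_dzero]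
      exact fun W => zero_le

theorem IsWeakSimulation.approx_le_pushPsi_semOf (hf : IsWeakSimulation Red Red' f)
    (hRed : IsStrategy Red) (hRed' : IsStrategy Red') (k : ℕ) (M : Term) :
    approx Red' k (f M) ≤ pushPsi (semOf (Conv Red) M) := by
  induction k generalizing M with
  | zero => exact fun W => zero_le
  | succ k ih =>
    rcases isValue_or_red_or_stuck Red M with hM | ⟨Ns, h⟩ | hM
    · rw [semOf_of_isValue hRed hM, pushPsi_dirac,
        ← approx_succ_of_isValue (Red := Red') (Term.isValue_psi hM) k]
      exact approx_le_of_detSteps hRed' (hf.detSteps hM) (k + 1)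
    · intro W
      calc approx Red' (k + 1) (f M) W
          ≤ uniformMean (approx Red' k · W) (Ns.map f) := (hf.weakStep h).approx_succ_le hRed' k W
        _ = uniformMean ((approx Red' k · W) ∘ f) Ns := uniformMean_map _ f Ns
        _ ≤ uniformMean (fun N => pushPsi (semOf (Conv Red) N) W) Ns :=
            uniformMean_mono Ns fun N => ih N W
        _ = pushPsi (semOf (Conv Red) M) W := by
            rw [semOf_of_red hRed h, pushPsi_uniformMean]
    · rw [approx_of_stuck (hf.stuck hM)]
      exact fun W => zero_le

theorem IsWeakSimulation.pushPsi_semOf (hf : IsWeakSimulation Red Red' f)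
    (hRed : IsStrategy Red) (hRed' : IsStrategy Red') (M : Term) :
    pushPsi (semOf (Conv Red) M) = semOf (Conv Red') (f M) := by
  refine le_antisymm (fun W => ?_) (fun W => ?_)
  · rw [semOf_eq_iSup_approx hRed, pushPsi_iSup_of_monotone fun _ _ hk => approx_mono Red hk M]
    exact iSup_le fun k => hf.pushPsi_approx_le hRed hRed' k M W
  · rw [semOf_eq_iSup_approx hRed']
    exact iSup_le fun k => hf.approx_le_pushPsi_semOf hRed hRed' k M W

end Simulation

namespace Term

/-- The two binary term constructors, which the translation treats uniformly. -/
inductive BinOp : Type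
  | app
  | choice

namespace BinOp

/-- The source term `M N` or `M ⊕ N`. -/
def term : BinOp → Term → Term → Term
  | app => .app
  | choice => .choice

/-- The translated operation on the (translated) values of the two operands, which is applied to
the continuation: `A B`, respectively `(λγ.γA) ⊕ (λγ.γB)`. -/
def redex : BinOp → Term → Term → Term
  | app, A, B => .app A B
  | choice, A, B =>
      .choice (lam (.app (var 0) (shift 1 0 A))) (lam (.app (var 0) (shift 1 0 B)))

/-- The continuation under which the left operand is evaluated, when the right operand is `N` and
the whole term has continuation `K`: `λα.⟨N⟩(λβ.redex α β K)`. -/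
def leftCont (op : BinOp) (N K : Term) : Term :=
  lam (.app (shift 1 0 (cps N)) (lam (.app (op.redex (var 1) (var 0)) (shift 2 0 K))))

/-- The continuation under which the right operand is evaluated, when the left operand has value
`V` and the whole term has continuation `K`: `λβ.redex Ψ(V) β K`. -/
def rightCont (op : BinOp) (V K : Term) : Term :=
  lam (.app (op.redex (shift 1 0 (psi V)) (var 0)) (shift 1 0 K))

theorem subst_redex (op : BinOp) (A B N : Term) (j : ℕ) :
    subst (op.redex A B) j N = op.redex (subst A j N) (subst B j N) := by
  cases op with
  | app => rfl
  | choice => simp [redex, subst, ← subst_shift_add _ _ 1 j.zero_le]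

theorem cps_term (op : BinOp) (M N : Term) :
    cps (op.term M N) = lam (.app (shift 1 0 (cps M)) (lam (.app (shift 2 0 (cps N))
      (lam (.app (op.redex (var 1) (var 0)) (var 2)))))) := by
  cases op <;> rfl

theorem colonV_term_of_left_not_isValue (op : BinOp) {M : Term} (hM : ¬ M.IsValue) (N K : Term) :
    colonV (op.term M N) K = colonV M (op.leftCont N K) := by
  rw [← isVal_iff_isValue] at hM
  cases op <;> simp [term, colonV, hM, leftCont, redex, shift]

theorem colonV_term_of_right_not_isValue (op : BinOp) {V N : Term} (hV : V.IsValue)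
    (hN : ¬ N.IsValue) (K : Term) : colonV (op.term V N) K = colonV N (op.rightCont V K) := by
  rw [← isVal_iff_isValue] at hV hN
  cases op <;> simp [term, colonV, hV, hN, rightCont, redex, shift, shift_shift_add]

theorem colonV_term_of_isValue (op : BinOp) {V V' : Term} (hV : V.IsValue) (hV' : V'.IsValue)
    (K : Term) : colonV (op.term V V') K = .app (op.redex (psi V) (psi V')) K := by
  rw [← isVal_iff_isValue] at hV hV'
  cases op <;> simp [term, colonV, hV, hV', redex]

end BinOp

theorem colonV_of_isValue {V : Term} (hV : V.IsValue) (K : Term) :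
    colonV V K = app K (psi V) := by
  cases hV <;> rfl

theorem detSteps_beta {M N P : Term} (h : subst M 0 N = P) :
    DetSteps RedN (app (lam M) N) P :=
  .single (h ▸ .beta)

namespace BinOp

theorem detSteps_rightCont (op : BinOp) {V : Term} (hV : V.IsValue) (N K : Term) :
    DetSteps RedN (colonV N (op.rightCont V K)) (colonV (op.term V N) K) := by
  by_cases hN : N.IsValue
  · rw [colonV_of_isValue hN, op.colonV_term_of_isValue hV hN]
    apply detSteps_beta
    simp [subst, subst_redex, subst_shift_one, shift_zero]
  · rw [op.colonV_term_of_right_not_isValue hV hN]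

theorem detSteps_leftCont (op : BinOp) (M : Term) {N : Term}
    (hN : ∀ K, DetSteps RedN (.app (cps N) K) (colonV N K)) (K : Term) :
    DetSteps RedN (colonV M (op.leftCont N K)) (colonV (op.term M N) K) := by
  by_cases hM : M.IsValue
  · rw [colonV_of_isValue hM]
    calc DetSteps RedN (.app (op.leftCont N K) (psi M)) (.app (cps N) (op.rightCont M K)) := by
          apply detSteps_beta
          simp [rightCont, subst, subst_redex, subst_shift_one, subst_shift_two]
      DetSteps RedN _ (colonV N (op.rightCont M K)) := hN _
      DetSteps RedN _ (colonV (op.term M N) K) := op.detSteps_rightCont hM N K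
  · rw [op.colonV_term_of_left_not_isValue hM]

theorem detSteps_app_cps_term (op : BinOp) {M N : Term}
    (hM : ∀ K, DetSteps RedN (.app (cps M) K) (colonV M K))
    (hN : ∀ K, DetSteps RedN (.app (cps N) K) (colonV N K)) (K : Term) :
    DetSteps RedN (.app (cps (op.term M N)) K) (colonV (op.term M N) K) := by
  calc DetSteps RedN (.app (cps (op.term M N)) K) (.app (cps M) (op.leftCont N K)) := by
        rw [cps_term]
        apply detSteps_beta
        simp [leftCont, subst, subst_redex, subst_shift_one, subst_shift_two]
    DetSteps RedN _ (colonV M (op.leftCont N K)) := hM _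
    DetSteps RedN _ (colonV (op.term M N) K) := op.detSteps_leftCont M hN K

end BinOp

theorem detSteps_app_cps (M K : Term) : DetSteps RedN (.app (cps M) K) (colonV M K) := by
  induction M generalizing K with
  | var n =>
    apply detSteps_beta
    simp [subst, colonV, psi, shift_zero]
  | lam M =>
    apply detSteps_beta
    simp [subst, colonV, psi, shift_zero, subst_shift_cancel]
  | app M N ihM ihN => exact BinOp.app.detSteps_app_cps_term ihM ihN K
  | choice M N ihM ihN => exact BinOp.choice.detSteps_app_cps_term ihM ihN K

namespace BinOp

theorem weakStep_colonV_term_left (op : BinOp) {M : Term} {Ls : List Term} (hM : ¬ M.IsValue)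
    (hstep : ∀ K, WeakStep RedN (colonV M K) (Ls.map (colonV · K))) (N K : Term) :
    WeakStep RedN (colonV (op.term M N) K) ((Ls.map (op.term · N)).map (colonV · K)) := by
  rw [op.colonV_term_of_left_not_isValue hM, List.map_map]
  exact (hstep _).map_trans fun L => op.detSteps_leftCont L (detSteps_app_cps N) K

theorem weakStep_colonV_term_right (op : BinOp) {V M : Term} {Ns : List Term} (hV : V.IsValue)
    (hM : ¬ M.IsValue) (hstep : ∀ K, WeakStep RedN (colonV M K) (Ns.map (colonV · K))) (K : Term) :
    WeakStep RedN (colonV (op.term V M) K) ((Ns.map (op.term V)).map (colonV · K)) := by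
  rw [op.colonV_term_of_right_not_isValue hV hM, List.map_map]
  exact (hstep _).map_trans fun N => op.detSteps_rightCont hV N K

end BinOp

theorem weakStep_colonV {M : Term} {Ns : List Term} (h : RedV M Ns) (K : Term) :
    WeakStep RedN (colonV M K) (Ns.map (colonV · K)) := by
  induction h generalizing K with
  | @beta M V hV =>
    rw [show colonV (app (lam M) V) K = app (app (lam (cps M)) (psi V)) K from
      BinOp.app.colonV_term_of_isValue (.lam M) hV K]
    refine ⟨_, _, .refl, .appL .beta, .cons ?_ .nil⟩
    rw [subst_cps_psi hV]
    exact detSteps_app_cps _ K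
  | @choice V W hV hW =>
    rw [show colonV (choice V W) K = app (BinOp.choice.redex (psi V) (psi W)) K from
      BinOp.choice.colonV_term_of_isValue hV hW K]
    have detSteps_select {U : Term} (hU : U.IsValue) :
        DetSteps RedN (app (lam (app (var 0) (shift 1 0 (psi U)))) K) (colonV U K) := by
      rw [colonV_of_isValue hU]
      apply detSteps_beta
      simp [subst, subst_shift_one, shift_zero]
    exact ⟨_, _, .refl, .appL .choice,
      .cons (detSteps_select hV) (.cons (detSteps_select hW) .nil)⟩
  | appL h ih => exact BinOp.app.weakStep_colonV_term_left h.not_isValue ih _ K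
  | appR hV h ih => exact BinOp.app.weakStep_colonV_term_right hV h.not_isValue ih K
  | choiceL h ih => exact BinOp.choice.weakStep_colonV_term_left h.not_isValue ih _ K
  | choiceR hV h ih => exact BinOp.choice.weakStep_colonV_term_right hV h.not_isValue ih K

namespace BinOp

theorem redV_term_left (op : BinOp) {M : Term} {Ls : List Term} (h : RedV M Ls) (N : Term) :
    RedV (op.term M N) (Ls.map (op.term · N)) := by
  cases op
  exacts [.appL h, .choiceL h]

theorem redV_term_right (op : BinOp) {V M : Term} {Ns : List Term} (hV : V.IsValue)
    (h : RedV M Ns) : RedV (op.term V M) (Ns.map (op.term V)) := by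
  cases op
  exacts [.appR hV h, .choiceR hV h]

theorem stuck_colonV_term (op : BinOp) {M N : Term} (hMN : ¬ (M.IsValue ∧ N.IsValue))
    (ihM : Stuck RedV M → ∀ K, Stuck RedN (colonV M K))
    (ihN : Stuck RedV N → ∀ K, Stuck RedN (colonV N K)) (h : Stuck RedV (op.term M N)) (K : Term) :
    Stuck RedN (colonV (op.term M N) K) := by
  by_cases hM : M.IsValue
  · have hN : ¬ N.IsValue := fun hN => hMN ⟨hM, hN⟩
    rw [op.colonV_term_of_right_not_isValue hM hN]
    exact ihN ⟨hN, fun Ns hred => h.2 _ (op.redV_term_right hM hred)⟩ _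
  · rw [op.colonV_term_of_left_not_isValue hM]
    exact ihM ⟨hM, fun Ls hred => h.2 _ (op.redV_term_left hred N)⟩ _

end BinOp

theorem stuck_redN_app_app_var (n : ℕ) (A K : Term) : Stuck RedN (app (app (var n) A) K) := by
  refine ⟨nofun, fun Ns h => ?_⟩
  cases h with | appL h => cases h with | appL h => cases h

theorem stuck_colonV {M : Term} (hM : Stuck RedV M) (K : Term) : Stuck RedN (colonV M K) := by
  induction M generalizing K with
  | var n => exact absurd (.var n) hM.1
  | lam M => exact absurd (.lam M) hM.1
  | app M N ihM ihN =>
    by_cases hMN : M.IsValue ∧ N.IsValue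
    · obtain ⟨hV, hW⟩ := hMN
      cases hV with
      | var n =>
        rw [show colonV (app (var n) N) K = app (app (var n) (psi N)) K from
          BinOp.app.colonV_term_of_isValue (.var n) hW K]
        exact stuck_redN_app_app_var n _ K
      | lam P => exact absurd (.beta hW) (hM.2 _)
    · exact BinOp.app.stuck_colonV_term hMN ihM ihN hM K
  | choice M N ihM ihN =>
    by_cases hMN : M.IsValue ∧ N.IsValue
    · exact absurd (.choice hMN.1 hMN.2) (hM.2 _)
    · exact BinOp.choice.stuck_colonV_term hMN ihM ihN hM K

theorem isWeakSimulation_colonV_id :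
    IsWeakSimulation RedV RedN (colonV · (lam (var 0))) where
  detSteps hV := by
    rw [colonV_of_isValue hV]
    apply detSteps_beta
    simp [subst, shift_zero]
  weakStep h := weakStep_colonV h _
  stuck hM := stuck_colonV hM _

end Term

theorem cps_simulation_v_by_n_general (M : Term) :
    pushPsi (semV M) = semN (.app (cps M) (.lam (.var 0))) := by
  calc pushPsi (semV M) = semN (colonV M (.lam (.var 0))) :=
        Term.isWeakSimulation_colonV_id.pushPsi_semOf isStrategy_redV isStrategy_redN M
    _ = semN (.app (cps M) (.lam (.var 0))) :=
        (semOf_eq_of_detSteps isStrategy_redN (Term.detSteps_app_cps M _)).symm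

/-- call-by-value is simulated by call-by-name through the CPS
translation: `Ψ(⟦M⟧v) = ⟦⟨M⟩(λx.x)⟧n`. -/
theorem cps_simulation_v_by_n (M : Term) (hM : M.Closed) :
    pushPsi (semV M) = semN (.app (cps M) (.lam (.var 0))) :=
  cps_simulation_v_by_n_general M
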